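/- arXiv:2009.12107 — 7 statements merged into one kernel-verified Lean document; each statement's English description precedes it below -/
import Mathlib

section
/- For every commutative ring R, every n ≥ 0, and all vectors v, w ∈ R^{n+1}, the Suslin matrix satisfies S_n(v,w)·S̄_n(v,w) = S̄_n(v,w)·S_n(v,w) = (v·wᵀ)·I_{2^n}, where v·wᵀ denotes the standard inner product Σ aᵢbᵢ. -/
open Matrix

noncomputable section

/-- Reindexing equivalence `Fin (2 ^ n) ⊕ Fin (2 ^ n) ≃ Fin (2 ^ (n + 1))`. -/
def pow2Equiv (n : ℕ) : Fin (2 ^ n) ⊕ Fin (2 ^ n) ≃ Fin (2 ^ (n + 1)) :=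
  finSumFinEquiv.trans (finCongr (by rw [pow_succ]; ring))

/-- The Suslin matrix `S_n(v, w)` of size `2 ^ n` associated to `v, w : Fin (n+1) → R`. -/
def sus (R : Type) [CommRing R] : (n : ℕ) → (Fin (n + 1) → R) → (Fin (n + 1) → R) →
    Matrix (Fin (2 ^ n)) (Fin (2 ^ n)) R
  | 0, v, _ => v 0 • 1
  | n + 1, v, w =>
      Matrix.reindex (pow2Equiv n) (pow2Equiv n)
        (Matrix.fromBlocks (v 0 • 1) (sus R n (v ∘ Fin.succ) (w ∘ Fin.succ))
          (-(sus R n (w ∘ Fin.succ) (v ∘ Fin.succ))ᵀ) (w 0 • 1))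

/-- The conjugate Suslin matrix `S̄_n(v, w) = S_n(w, v)ᵀ`. -/
def susBar (R : Type) [CommRing R] (n : ℕ) (v w : Fin (n + 1) → R) :
    Matrix (Fin (2 ^ n)) (Fin (2 ^ n)) R :=
  (sus R n w v)ᵀ

/-- Suslin's matrices `J_n`. -/
def Jmat (R : Type) [CommRing R] : (n : ℕ) → Matrix (Fin (2 ^ n)) (Fin (2 ^ n)) R
  | 0 => 1
  | n + 1 =>
      if Even (n + 1) then
        Matrix.reindex (pow2Equiv n) (pow2Equiv n)
          (Matrix.fromBlocks (Jmat R n) 0 0 (-(Jmat R n)))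
      else
        Matrix.reindex (pow2Equiv n) (pow2Equiv n)
          (Matrix.fromBlocks 0 (Jmat R n) (-(Jmat R n)) 0)

/-- The involution `M ↦ M* = J_n · Mᵀ · J_nᵀ`. -/
def invol (R : Type) [CommRing R] (n : ℕ) (M : Matrix (Fin (2 ^ n)) (Fin (2 ^ n)) R) :
    Matrix (Fin (2 ^ n)) (Fin (2 ^ n)) R :=
  Jmat R n * Mᵀ * (Jmat R n)ᵀ

/-- `φ(v, w) = [[0, S_n(v,w)], [S̄_n(v,w), 0]]` (note the shift: vectors in `R^{n+1}`,
matrices of size `2 ^ (n + 1)`). -/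
def phiMat (R : Type) [CommRing R] (n : ℕ) (v w : Fin (n + 1) → R) :
    Matrix (Fin (2 ^ (n + 1))) (Fin (2 ^ (n + 1))) R :=
  Matrix.reindex (pow2Equiv n) (pow2Equiv n)
    (Matrix.fromBlocks 0 (sus R n v w) (susBar R n v w) 0)

/-- The set of Suslin matrices of size `2 ^ m`. -/
def SuslinSet (R : Type) [CommRing R] (m : ℕ) : Set (Matrix (Fin (2 ^ m)) (Fin (2 ^ m)) R) :=
  {S | ∃ v w : Fin (m + 1) → R, S = sus R m v w}

/-- The image of the hyperbolic space `R^{m+1} ⊕ R^{m+1}` inside the Clifford algebra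
`M_{2^{m+1}}(R)`. -/
def PhiSet (R : Type) [CommRing R] (m : ℕ) :
    Set (Matrix (Fin (2 ^ (m + 1))) (Fin (2 ^ (m + 1))) R) :=
  {x | ∃ v w : Fin (m + 1) → R, x = phiMat R m v w}

/-- The block diagonal matrix `diag(g₁, g₂)`. -/
def diagBlock (R : Type) [CommRing R] (m : ℕ)
    (g₁ g₂ : Matrix (Fin (2 ^ m)) (Fin (2 ^ m)) R) :
    Matrix (Fin (2 ^ (m + 1))) (Fin (2 ^ (m + 1))) R :=
  Matrix.reindex (pow2Equiv m) (pow2Equiv m) (Matrix.fromBlocks g₁ 0 0 g₂)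

/-- `Spin_{2(m+1)}(R)`, as the set of pairs `(g₁, g₂)` such that `x = diag(g₁, g₂)`
satisfies `x · x* = 1` and conjugation by `x` maps the image of the hyperbolic space
onto itself. -/
def SpinPair (R : Type) [CommRing R] (m : ℕ) :
    Set (Matrix (Fin (2 ^ m)) (Fin (2 ^ m)) R × Matrix (Fin (2 ^ m)) (Fin (2 ^ m)) R) :=
  {p | IsUnit p.1 ∧ IsUnit p.2 ∧
    diagBlock R m p.1 p.2 * invol R (m + 1) (diagBlock R m p.1 p.2) = 1 ∧
    (fun y => diagBlock R m p.1 p.2 * y * (diagBlock R m p.1 p.2)⁻¹) '' PhiSet R m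
      = PhiSet R m}

/-- The group `G_m(R)` of `g ∈ GL_{2^m}(R)` such that `g · S · g*` is a Suslin matrix
for every Suslin matrix `S`. -/
def GSet (R : Type) [CommRing R] (m : ℕ) : Set (Matrix (Fin (2 ^ m)) (Fin (2 ^ m)) R) :=
  {g | IsUnit g ∧ ∀ S ∈ SuslinSet R m, g * S * invol R m g ∈ SuslinSet R m}

/-- The group `SG_m(R)` of `g ∈ G_m(R)` preserving the length `l(S(v,w)) = v ⬝ᵥ w`. -/
def SGSet (R : Type) [CommRing R] (m : ℕ) : Set (Matrix (Fin (2 ^ m)) (Fin (2 ^ m)) R) :=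
  {g | g ∈ GSet R m ∧ ∀ v w v' w' : Fin (m + 1) → R,
    g * sus R m v w * invol R m g = sus R m v' w' → v' ⬝ᵥ w' = v ⬝ᵥ w}

/-- The hyperbolic quadratic form `q(v, w) = v ⬝ᵥ w` on `R^n ⊕ R^n`. -/
def hypForm (R : Type) [CommRing R] (n : ℕ) :
    QuadraticForm R ((Fin n → R) × (Fin n → R)) :=
  LinearMap.BilinMap.toQuadraticMap
    (LinearMap.mk₂ R (fun x y => x.1 ⬝ᵥ y.2)
      (fun x x' y => by simp [add_dotProduct])
      (fun c x y => by simp [smul_dotProduct])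
      (fun x y y' => by simp [dotProduct_add])
      (fun x c y => by simp [dotProduct_smul]))

/-- `E_i = S_m(e_i, 0)`. -/
def Emat (R : Type) [CommRing R] (m : ℕ) (i : Fin (m + 1)) :
    Matrix (Fin (2 ^ m)) (Fin (2 ^ m)) R :=
  sus R m (Pi.single i 1) 0

/-- `F_i = S_m(0, e_i)`. -/
def Fmat (R : Type) [CommRing R] (m : ℕ) (i : Fin (m + 1)) :
    Matrix (Fin (2 ^ m)) (Fin (2 ^ m)) R :=
  sus R m 0 (Pi.single i 1)


/-- For every commutative ring `R`, every `n ≥ 0` and all `v, w ∈ R^{n+1}`,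
`S_n(v,w) · S̄_n(v,w) = S̄_n(v,w) · S_n(v,w) = (v ⬝ᵥ w) • 1`. -/
theorem suslin_mul_conj (R : Type) [CommRing R] (n : ℕ) (v w : Fin (n + 1) → R) :
    sus R n v w * susBar R n v w = (v ⬝ᵥ w) • (1 : Matrix (Fin (2 ^ n)) (Fin (2 ^ n)) R) ∧
    susBar R n v w * sus R n v w = (v ⬝ᵥ w) • (1 : Matrix (Fin (2 ^ n)) (Fin (2 ^ n)) R) := by
  induction n with
  | zero =>
    constructor <;> simp [susBar, sus, smul_smul, dotProduct, mul_comm]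
  | succ n ih =>
    have hd : v ⬝ᵥ w = v 0 * w 0 + (v ∘ Fin.succ) ⬝ᵥ (w ∘ Fin.succ) := by
      simp [dotProduct, Fin.sum_univ_succ]
    obtain ⟨h1, h2⟩ := ih (v ∘ Fin.succ) (w ∘ Fin.succ)
    unfold susBar at h1 h2 ⊢
    have key : ∀ c : R, (c • (1 : Matrix (Fin (2 ^ (n + 1))) (Fin (2 ^ (n + 1))) R)) =
        (Matrix.fromBlocks (c • (1 : Matrix (Fin (2 ^ n)) (Fin (2 ^ n)) R)) 0 0
          (c • (1 : Matrix (Fin (2 ^ n)) (Fin (2 ^ n)) R))).submatrix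
          (pow2Equiv n).symm (pow2Equiv n).symm := by
      intro c
      have : Matrix.fromBlocks (c • (1 : Matrix (Fin (2 ^ n)) (Fin (2 ^ n)) R)) 0 0
          (c • (1 : Matrix (Fin (2 ^ n)) (Fin (2 ^ n)) R))
          = c • 1 := by
        rw [← Matrix.fromBlocks_one, Matrix.fromBlocks_smul]; simp
      rw [this, Matrix.submatrix_smul, Pi.smul_apply, Pi.smul_apply, Matrix.submatrix_one_equiv]
    rw [key, hd]
    simp only [sus, Matrix.reindex_apply, Matrix.transpose_submatrix, Matrix.fromBlocks_transpose,
      Matrix.submatrix_mul_equiv, Matrix.fromBlocks_multiply]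
    constructor <;> congr 2 <;>
      simp [h1, h2, smul_smul, add_smul, mul_comm, add_comm]
end
end

section
/- For every commutative ring R, every n ≥ 1, and all vectors v, w ∈ R^{n+1}, det S_n(v,w) = (v·wᵀ)^{2^{n−1}}. -/
open Matrix

noncomputable section

theorem block_det_reg {S : Type*} [CommRing S] {m : Type*} [Fintype m] [DecidableEq m]
    (a b : S) (hb : IsRegular b) (B C : Matrix m m S) :
    (Matrix.fromBlocks (a • 1) B C (b • 1)).det = ((a * b) • (1 : Matrix m m S) - B * C).det := by
  have h : Matrix.fromBlocks (a • 1) B C (b • 1) *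
      Matrix.fromBlocks (b • 1) 0 (-C) (1 : Matrix m m S) =
      Matrix.fromBlocks ((a * b) • (1 : Matrix m m S) - B * C) B 0 (b • 1) := by
    rw [Matrix.fromBlocks_multiply]
    congr 1 <;> simp [sub_eq_add_neg, smul_smul, mul_comm]
  have h2 := congrArg Matrix.det h
  rw [Matrix.det_mul, Matrix.det_fromBlocks_zero₁₂, Matrix.det_fromBlocks_zero₂₁,
    Matrix.det_one, mul_one, Matrix.det_smul, Matrix.det_one, mul_one] at h2
  exact (hb.pow _).right h2

theorem block_det {S : Type*} [CommRing S] {m : Type*} [Fintype m] [DecidableEq m]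
    (a b : S) (B C : Matrix m m S) :
    (Matrix.fromBlocks (a • 1) B C (b • 1)).det = ((a * b) • (1 : Matrix m m S) - B * C).det := by
  have h := block_det_reg (Polynomial.C a) (Polynomial.X + Polynomial.C b)
    (Polynomial.monic_X_add_C b).isRegular
    (B.map Polynomial.C) (C.map Polynomial.C)
  have h2 := congrArg (Polynomial.evalRingHom (0 : S)) h
  rw [RingHom.map_det, RingHom.map_det] at h2
  convert h2 using 2
  · ext i j
    rcases i with i | i <;> rcases j with j | j <;>
      simp [Matrix.one_apply, apply_ite (Polynomial.eval (0 : S))]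
  · ext i j
    simp [Matrix.one_apply, Matrix.mul_apply, Polynomial.eval_finsetSum,
      apply_ite (Polynomial.eval (0 : S))]

theorem sus_mul (R : Type) [CommRing R] (n : ℕ) : ∀ v w : Fin (n + 1) → R,
    sus R n v w * (sus R n w v)ᵀ = (v ⬝ᵥ w) • 1 ∧
    (sus R n w v)ᵀ * sus R n v w = (v ⬝ᵥ w) • 1 := by
  induction n with
  | zero =>
    intro v w
    constructor <;> simp [sus, dotProduct, smul_smul, mul_comm]
  | succ n ih =>
    intro v w
    obtain ⟨h1, h2⟩ := ih (v ∘ Fin.succ) (w ∘ Fin.succ)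
    have hd : v ⬝ᵥ w = v 0 * w 0 + (v ∘ Fin.succ) ⬝ᵥ (w ∘ Fin.succ) := by
      simp [dotProduct, Fin.sum_univ_succ]
    have h1n : ∀ c : R, c • (1 : Matrix (Fin (2 ^ (n + 1))) (Fin (2 ^ (n + 1))) R) =
        (Matrix.fromBlocks (c • 1) 0 0 (c • 1)).submatrix
          (pow2Equiv n).symm (pow2Equiv n).symm := by
      intro c
      have h : Matrix.fromBlocks (c • (1 : Matrix (Fin (2 ^ n)) (Fin (2 ^ n)) R)) 0 0
          (c • (1 : Matrix (Fin (2 ^ n)) (Fin (2 ^ n)) R)) = c • 1 := by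
        rw [← Matrix.fromBlocks_one, Matrix.fromBlocks_smul]; simp
      rw [h]
      ext i j
      simp [Matrix.one_apply]
    simp only [sus, Matrix.reindex_apply, Matrix.transpose_submatrix, Matrix.fromBlocks_transpose,
      Matrix.submatrix_mul_equiv, Matrix.fromBlocks_multiply, Matrix.transpose_neg,
      Matrix.transpose_transpose, Matrix.transpose_smul, Matrix.transpose_one]
    rw [h1n, hd]
    constructor
    · congr 2 <;> simp [h1, h2, smul_smul, add_smul, mul_comm, add_comm]
    · congr 2 <;> simp [h1, h2, smul_smul, add_smul, mul_comm, add_comm]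

/-- For every commutative ring `R`, every `n ≥ 1` and all `v, w ∈ R^{n+1}`,
`det S_n(v,w) = (v ⬝ᵥ w) ^ (2 ^ (n - 1))`.  (Stated with `n + 1` in place of `n`.) -/
theorem suslin_det (R : Type) [CommRing R] (n : ℕ) (v w : Fin (n + 1 + 1) → R) :
    (sus R (n + 1) v w).det = (v ⬝ᵥ w) ^ (2 ^ n) := by
  have hd : v ⬝ᵥ w = v 0 * w 0 + (v ∘ Fin.succ) ⬝ᵥ (w ∘ Fin.succ) := by
    simp [dotProduct, Fin.sum_univ_succ]
  rw [sus, Matrix.det_reindex_self, block_det, mul_neg, sub_neg_eq_add,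
    (sus_mul R n (v ∘ Fin.succ) (w ∘ Fin.succ)).1, ← add_smul, ← hd, Matrix.det_smul,
    Matrix.det_one, mul_one, Fintype.card_fin]
end
end

section
/- For every commutative ring R and every n ≥ 0, the matrix J_n ∈ M_{2^n}(R) satisfies det J_n = 1, J_nᵀ = J_n^{−1}, and J_nᵀ = (−1)^{n(n+1)/2}·J_n; in particular J_n is skew-symmetric when n ≡ 1 or 2 (mod 4) and symmetric when n ≡ 0 or 3 (mod 4). -/
open Matrix

noncomputable section

theorem det_skewBlock {R : Type} [CommRing R] {m : Type} [Fintype m] [DecidableEq m]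
    (A : Matrix m m R) : (Matrix.fromBlocks 0 A (-A) 0).det = A.det * A.det := by
  have h : Matrix.fromBlocks 0 A (-A) 0 =
      Matrix.fromBlocks 1 1 0 1 * Matrix.fromBlocks 1 0 (-1) 1 *
        Matrix.fromBlocks 1 1 0 1 * Matrix.fromBlocks A 0 0 A := by
    simp [Matrix.fromBlocks_multiply]
  rw [h]
  simp [Matrix.det_fromBlocks_zero₂₁]

theorem Jmat_det (R : Type) [CommRing R] (n : ℕ) : (Jmat R n).det = 1 := by
  induction n with
  | zero => simp [Jmat]
  | succ n ih =>
    rw [Jmat]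
    split_ifs with h
    · rw [Matrix.det_reindex_self, Matrix.det_fromBlocks_zero₂₁, Matrix.det_neg, ih]
      have hn : n ≠ 0 := by rintro rfl; simp at h
      have : Even (2 ^ n) := by simp [Nat.even_pow, hn]
      simp [this.neg_one_pow]
    · rw [Matrix.det_reindex_self, det_skewBlock, ih, one_mul]

theorem Jmat_mul_transpose (R : Type) [CommRing R] (n : ℕ) :
    Jmat R n * (Jmat R n)ᵀ = 1 := by
  induction n with
  | zero => simp [Jmat]
  | succ n ih =>
    rw [Jmat]
    split_ifs with h <;>
    · simp [Matrix.fromBlocks_transpose, Matrix.submatrix_mul_equiv,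
        Matrix.fromBlocks_multiply, ih]

theorem tri_succ (n : ℕ) : (n + 1) * (n + 1 + 1) / 2 = n * (n + 1) / 2 + (n + 1) := by
  have : (n + 1) * (n + 1 + 1) = n * (n + 1) + (n + 1) * 2 := by ring
  rw [this, Nat.add_mul_div_right _ _ (by norm_num)]

theorem Jmat_transpose (R : Type) [CommRing R] (n : ℕ) :
    (Jmat R n)ᵀ = ((-1 : R) ^ (n * (n + 1) / 2)) • Jmat R n := by
  induction n with
  | zero => simp [Jmat]
  | succ n ih =>
    rw [tri_succ, pow_add (-1 : R), Jmat]
    split_ifs with h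
    · rw [h.neg_one_pow, mul_one, Matrix.transpose_reindex, Matrix.fromBlocks_transpose,
        Matrix.transpose_neg, ih]
      ext i j
      simp only [Matrix.reindex_apply, Matrix.submatrix_apply, Matrix.smul_apply]
      rcases (pow2Equiv n).symm i with a | a <;> rcases (pow2Equiv n).symm j with b | b <;> simp
    · rw [(Nat.not_even_iff_odd.mp h).neg_one_pow, Matrix.transpose_reindex,
        Matrix.fromBlocks_transpose, Matrix.transpose_neg, ih]
      ext i j
      simp only [Matrix.reindex_apply, Matrix.submatrix_apply, Matrix.smul_apply]
      rcases (pow2Equiv n).symm i with a | a <;> rcases (pow2Equiv n).symm j with b | b <;> simp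

theorem tri_parity (n : ℕ) :
    ((n % 4 = 1 ∨ n % 4 = 2) → Odd (n * (n + 1) / 2)) ∧
    ((n % 4 = 0 ∨ n % 4 = 3) → Even (n * (n + 1) / 2)) := by
  induction n with
  | zero => simp
  | succ n ih =>
    rw [tri_succ]
    generalize n * (n + 1) / 2 = t at *
    simp only [Nat.odd_iff, Nat.even_iff] at *
    omega

/-- `det J_n = 1`, `J_nᵀ = J_n⁻¹` and `J_nᵀ = (-1)^{n(n+1)/2} • J_n`;
in particular `J_n` is skew-symmetric when `n ≡ 1, 2 (mod 4)` and symmetric when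
`n ≡ 0, 3 (mod 4)`. -/
theorem Jmat_props (R : Type) [CommRing R] (n : ℕ) :
    (Jmat R n).det = 1 ∧
    (Jmat R n)ᵀ = (Jmat R n)⁻¹ ∧
    (Jmat R n)ᵀ = ((-1 : R) ^ (n * (n + 1) / 2)) • Jmat R n ∧
    ((n % 4 = 1 ∨ n % 4 = 2) → (Jmat R n)ᵀ = -(Jmat R n)) ∧
    ((n % 4 = 0 ∨ n % 4 = 3) → (Jmat R n)ᵀ = Jmat R n) := by
  refine ⟨Jmat_det R n, (Matrix.inv_eq_right_inv (Jmat_mul_transpose R n)).symm,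
    Jmat_transpose R n, fun h => ?_, fun h => ?_⟩
  · rw [Jmat_transpose, ((tri_parity n).1 h).neg_one_pow, neg_one_smul]
  · rw [Jmat_transpose, ((tri_parity n).2 h).neg_one_pow, one_smul]
end
end

section
/- For every commutative ring R and every n ≥ 1, the R-algebra homomorphism φ : Cl → M_{2^n}(R) extending the linear map (v,w) ↦ [[0, S_{n-1}(v,w)], [S̄_{n-1}(v,w), 0]] is an isomorphism of R-algebras. -/
open Matrix

noncomputable section

/-- Rearrangement of the four blocks. -/
def permFour (ι : Type) : (ι ⊕ ι) ⊕ (ι ⊕ ι) ≃ (ι ⊕ ι) ⊕ (ι ⊕ ι) where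
  toFun
    | .inl (.inl i) => .inl (.inl i)
    | .inl (.inr i) => .inr (.inr i)
    | .inr (.inl i) => .inr (.inl i)
    | .inr (.inr i) => .inl (.inr i)
  invFun
    | .inl (.inl i) => .inl (.inl i)
    | .inl (.inr i) => .inr (.inr i)
    | .inr (.inl i) => .inr (.inl i)
    | .inr (.inr i) => .inl (.inr i)
  left_inv := by rintro ((i | i) | (i | i)) <;> rfl
  right_inv := by rintro ((i | i) | (i | i)) <;> rfl

/-- The index equivalence exhibiting the recursive block structure of `phiMat`. -/
def tauEquiv (n : ℕ) : Fin (2 ^ (n + 1)) ⊕ Fin (2 ^ (n + 1)) ≃ Fin (2 ^ (n + 1 + 1)) :=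
  (((pow2Equiv n).sumCongr (pow2Equiv n)).symm.trans (permFour _)).trans
    (((pow2Equiv n).sumCongr (pow2Equiv n)).trans (pow2Equiv (n + 1)))

theorem phiMat_succ (R : Type) [CommRing R] (n : ℕ) (v w : Fin (n + 1 + 1) → R) :
    (phiMat R (n + 1) v w).submatrix (tauEquiv n) (tauEquiv n) =
      Matrix.fromBlocks (phiMat R n (v ∘ Fin.succ) (w ∘ Fin.succ)) (v 0 • 1) (w 0 • 1)
        (-(phiMat R n (v ∘ Fin.succ) (w ∘ Fin.succ))) := by
  ext i j
  obtain ⟨i, rfl⟩ := ((pow2Equiv n).sumCongr (pow2Equiv n)).surjective i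
  obtain ⟨j, rfl⟩ := ((pow2Equiv n).sumCongr (pow2Equiv n)).surjective j
  rcases i with ((i | i) | (i | i)) <;> rcases j with ((j | j) | (j | j)) <;>
    simp [tauEquiv, permFour, phiMat, susBar, sus, Matrix.one_apply, eq_comm]

theorem subalgebra_eq_top {R : Type} [CommRing R] {κ X : Type} [Fintype κ] [DecidableEq κ]
    (f : X → Matrix κ κ R) (hf : Algebra.adjoin R (Set.range f) = ⊤)
    (A : Subalgebra R (Matrix (κ ⊕ κ) (κ ⊕ κ) R))
    (h1 : Matrix.fromBlocks 0 1 0 0 ∈ A) (h2 : Matrix.fromBlocks 0 0 1 0 ∈ A)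
    (h3 : ∀ x, Matrix.fromBlocks (f x) 0 0 (-(f x)) ∈ A) : A = ⊤ := by
  have hp : Matrix.fromBlocks 1 0 0 0 ∈ A := by
    simpa [Matrix.fromBlocks_multiply] using A.mul_mem h1 h2
  have key : ∀ m : Matrix κ κ R, Matrix.fromBlocks m 0 0 0 ∈ A := by
    intro m
    have hm : m ∈ Algebra.adjoin R (Set.range f) := by rw [hf]; trivial
    induction hm using Algebra.adjoin_induction with
    | mem x hx =>
      obtain ⟨x, rfl⟩ := hx
      simpa [Matrix.fromBlocks_multiply] using A.mul_mem hp (h3 x)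
    | algebraMap r =>
      simpa [Matrix.fromBlocks_smul, Algebra.algebraMap_eq_smul_one] using A.smul_mem hp r
    | add x y _ _ hx hy => simpa [Matrix.fromBlocks_add] using A.add_mem hx hy
    | mul x y _ _ hx hy => simpa [Matrix.fromBlocks_multiply] using A.mul_mem hx hy
  rw [eq_top_iff]
  rintro M -
  rw [← Matrix.fromBlocks_toBlocks M]
  have a := key M.toBlocks₁₁
  have b := A.mul_mem (key M.toBlocks₁₂) h1
  have c := A.mul_mem h2 (key M.toBlocks₂₁)
  have d := A.mul_mem (A.mul_mem h2 (key M.toBlocks₂₂)) h1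
  simpa [Matrix.fromBlocks_multiply, Matrix.fromBlocks_add] using
    A.add_mem (A.add_mem a b) (A.add_mem c d)

theorem subalgebra_eq_top' {R : Type} [CommRing R] {κ μ X : Type} [Fintype κ] [DecidableEq κ]
    [Fintype μ] [DecidableEq μ] (e : κ ⊕ κ ≃ μ)
    (f : X → Matrix κ κ R) (hf : Algebra.adjoin R (Set.range f) = ⊤)
    (A : Subalgebra R (Matrix μ μ R))
    (h1 : ∃ M ∈ A, M.submatrix e e = Matrix.fromBlocks 0 1 0 0)
    (h2 : ∃ M ∈ A, M.submatrix e e = Matrix.fromBlocks 0 0 1 0)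
    (h3 : ∀ x, ∃ M ∈ A, M.submatrix e e = Matrix.fromBlocks (f x) 0 0 (-(f x))) : A = ⊤ := by
  have h := subalgebra_eq_top f hf (A.map (Matrix.reindexAlgEquiv R R e.symm).toAlgHom) h1 h2 h3
  rw [eq_top_iff]
  rintro M -
  have hM : Matrix.reindexAlgEquiv R R e.symm M ∈
      A.map (Matrix.reindexAlgEquiv R R e.symm).toAlgHom := by rw [h]; trivial
  obtain ⟨N, hN, hNM⟩ := hM
  have : N = M := (Matrix.reindexAlgEquiv R R e.symm).injective hNM
  exact this ▸ hN

theorem sus_zero_zero (R : Type) [CommRing R] (n : ℕ) : sus R n 0 0 = 0 := by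
  induction n with
  | zero => simp [sus]
  | succ n ih =>
    have : (0 : Fin (n + 1 + 1) → R) ∘ Fin.succ = 0 := rfl
    simp [sus, this, ih]

theorem phiMat_zero_zero (R : Type) [CommRing R] (n : ℕ) : phiMat R n 0 0 = 0 := by
  simp [phiMat, susBar, sus_zero_zero]

theorem adjoin_phiMat (R : Type) [CommRing R] (n : ℕ) :
    Algebra.adjoin R (Set.range fun x : (Fin (n + 1) → R) × (Fin (n + 1) → R) =>
      phiMat R n x.1 x.2) = ⊤ := by
  induction n with
  | zero =>
    refine subalgebra_eq_top' (κ := Fin (2 ^ 0)) (X := Empty) (pow2Equiv 0) (fun x => x.elim)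
      ?_ _ ?_ ?_ ?_
    · rw [eq_top_iff]
      rintro M -
      have : M = algebraMap R _ (M 0 0) := by
        ext i j
        fin_cases i
        fin_cases j
        simp [Matrix.algebraMap_matrix_apply]
      rw [this]
      exact Subalgebra.algebraMap_mem _ _
    · refine ⟨_, Algebra.subset_adjoin ⟨(1, 0), rfl⟩, ?_⟩
      simp [phiMat, susBar, sus]
    · refine ⟨_, Algebra.subset_adjoin ⟨(0, 1), rfl⟩, ?_⟩
      simp [phiMat, susBar, sus]
    · intro x
      exact x.elim
  | succ n ih =>
    refine subalgebra_eq_top' (tauEquiv n) _ ih _ ?_ ?_ ?_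
    · refine ⟨_, Algebra.subset_adjoin ⟨(Fin.cons 1 0, Fin.cons 0 0), rfl⟩, ?_⟩
      rw [phiMat_succ]
      have h0 : ∀ a : R, (Fin.cons a 0 : Fin (n + 1 + 1) → R) ∘ Fin.succ = 0 := fun a => rfl
      simp only [h0, phiMat_zero_zero]
      simp
    · refine ⟨_, Algebra.subset_adjoin ⟨(Fin.cons 0 0, Fin.cons 1 0), rfl⟩, ?_⟩
      rw [phiMat_succ]
      have h0 : ∀ a : R, (Fin.cons a 0 : Fin (n + 1 + 1) → R) ∘ Fin.succ = 0 := fun a => rfl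
      simp only [h0, phiMat_zero_zero]
      simp
    · rintro ⟨v, w⟩
      refine ⟨_, Algebra.subset_adjoin ⟨(Fin.cons 0 v, Fin.cons 0 w), rfl⟩, ?_⟩
      rw [phiMat_succ]
      have h0 : ∀ u : Fin (n + 1) → R,
        (Fin.cons 0 u : Fin (n + 1 + 1) → R) ∘ Fin.succ = u := fun u => rfl
      simp only [h0]
      simp

theorem exists_linearEquiv (R : Type) [CommRing R] (n : ℕ) :
    Nonempty (CliffordAlgebra (hypForm R (n + 1)) ≃ₗ[R]
      Matrix (Fin (2 ^ (n + 1))) (Fin (2 ^ (n + 1))) R) := by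
  obtain ⟨B, hB⟩ : ∃ B : LinearMap.BilinForm R ((Fin (n + 1) → R) × (Fin (n + 1) → R)),
      B.toQuadraticMap = hypForm R (n + 1) := ⟨_, rfl⟩
  let e1 : CliffordAlgebra (hypForm R (n + 1)) ≃ₗ[R]
      ExteriorAlgebra R ((Fin (n + 1) → R) × (Fin (n + 1) → R)) :=
    CliffordAlgebra.changeFormEquiv (B := -B)
      (by rw [← hB]; ext x; simp)
  let b0 := ((Pi.basisFun R (Fin (n + 1))).prod (Pi.basisFun R (Fin (n + 1)))).reindex
    finSumFinEquiv
  let b1 := (b0.ExteriorAlgebra).map e1.symm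
  let b2 := Matrix.stdBasis R (Fin (2 ^ (n + 1))) (Fin (2 ^ (n + 1)))
  refine ⟨b1.equiv b2 (Fintype.equivOfCardEq ?_)⟩
  simp [pow_add]

/-- for `n ≥ 1`, the `R`-algebra homomorphism `φ` from the Clifford algebra
of the hyperbolic form on `R^n ⊕ R^n` to `M_{2^n}(R)` extending the linear map
`(v, w) ↦ [[0, S_{n-1}(v,w)], [S̄_{n-1}(v,w), 0]]` is an isomorphism.
(Stated with `n + 1` in place of `n`.) -/
theorem clifford_iso_matrix (R : Type) [CommRing R] (n : ℕ)
    (Φ : CliffordAlgebra (hypForm R (n + 1)) →ₐ[R]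
      Matrix (Fin (2 ^ (n + 1))) (Fin (2 ^ (n + 1))) R)
    (hΦ : ∀ x : (Fin (n + 1) → R) × (Fin (n + 1) → R),
      Φ (CliffordAlgebra.ι (hypForm R (n + 1)) x) = phiMat R n x.1 x.2) :
    Function.Bijective Φ := by
  obtain ⟨e⟩ := exists_linearEquiv R n
  refine OrzechProperty.bijective_of_surjective_of_injective e.toLinearMap Φ.toLinearMap
    e.injective ?_
  have hr : Φ.range = ⊤ := by
    rw [eq_top_iff, ← adjoin_phiMat R n, Algebra.adjoin_le_iff]
    rintro _ ⟨x, rfl⟩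
    exact ⟨_, hΦ x⟩
  exact AlgHom.range_eq_top Φ |>.1 hr
end
end

section
/- Let R be a commutative ring, n ≥ 1, A an associative unital R-algebra in which R embeds (the structure map R → A is injective), ι : R^n ⊕ R^n → A an injective R-linear map, and α : R^n ⊕ R^n → R^n ⊕ R^n an isometry of the quadratic form q(v,w) = v·wᵀ such that ι(x)·ι(α(x)) = ι(α(x))·ι(x) = q(x)·1_A for all x ∈ R^n ⊕ R^n. Then the R-algebra homomorphism φ : Cl → M_2(A) extending the linear map x ↦ [[0, ι(x)], [ι(α(x)), 0]] is injective. -/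
open Matrix

noncomputable section

set_option linter.unusedSimpArgs false

/-- Matrix-unit span closed under multiplication. -/
theorem span_mul_aux {R B : Type} [CommRing R] [Ring B] [Algebra R B] (C : Subalgebra R B)
    (e f : B) (he : e * e = 0) (hf : f * f = 0) (h1 : e * f + f * e = 1)
    (hCe : ∀ c ∈ C, c * e = e * c) (hCf : ∀ c ∈ C, c * f = f * c) (x y : B)
    (hx : ∃ a ∈ C, ∃ b ∈ C, ∃ c ∈ C, ∃ d ∈ C,
      x = a * (e * f) + b * e + c * f + d * (f * e))
    (hy : ∃ a ∈ C, ∃ b ∈ C, ∃ c ∈ C, ∃ d ∈ C,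
      y = a * (e * f) + b * e + c * f + d * (f * e)) :
    ∃ a ∈ C, ∃ b ∈ C, ∃ c ∈ C, ∃ d ∈ C,
      x * y = a * (e * f) + b * e + c * f + d * (f * e) := by
  obtain ⟨a, ha, b, hb, c, hc, d, hd, rfl⟩ := hx
  obtain ⟨a', ha', b', hb', c', hc', d', hd', rfl⟩ := hy
  refine ⟨a * a' + b * c', C.add_mem (C.mul_mem ha ha') (C.mul_mem hb hc'),
    a * b' + b * d', C.add_mem (C.mul_mem ha hb') (C.mul_mem hb hd'),
    c * a' + d * c', C.add_mem (C.mul_mem hc ha') (C.mul_mem hd hc'),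
    c * b' + d * d', C.add_mem (C.mul_mem hc hb') (C.mul_mem hd hd'), ?_⟩
  have efe : e * (f * e) = e := by
    have : f * e = 1 - e * f := by rw [← h1]; abel
    rw [this, mul_sub, ← mul_assoc, he]; simp
  have fef : f * (e * f) = f := by
    have : e * f = 1 - f * e := by rw [← h1]; abel
    rw [this, mul_sub, ← mul_assoc, hf]; simp
  have ee : ∀ z, e * (e * z) = 0 := fun z => by rw [← mul_assoc, he, zero_mul]
  have ff : ∀ z, f * (f * z) = 0 := fun z => by rw [← mul_assoc, hf, zero_mul]
  have key : ∀ p q s t : B, q ∈ C → (s = e ∨ s = f ∨ s = e * f ∨ s = f * e) →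
      (p * s) * (q * t) = p * q * (s * t) := by
    intro p q s t hq hs
    have : q * s = s * q := by
      rcases hs with rfl | rfl | rfl | rfl
      · exact hCe q hq
      · exact hCf q hq
      · rw [← mul_assoc, hCe q hq, mul_assoc, hCf q hq, mul_assoc]
      · rw [← mul_assoc, hCf q hq, mul_assoc, hCe q hq, mul_assoc]
    rw [mul_assoc, ← mul_assoc s q t, ← this, mul_assoc, mul_assoc]
  have e3 : e * (f * (e * f)) = e * f := by rw [fef]
  have f3 : f * (e * (f * e)) = f * e := by rw [efe]
  simp only [mul_add, add_mul]
  simp only [key _ a' _ _ ha', key _ b' _ _ hb', key _ c' _ _ hc', key _ d' _ _ hd', true_or, or_true]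
  simp only [mul_assoc e f, mul_assoc f e, ee, ff, he, hf, efe, fef, e3, f3, mul_zero, add_zero,
    zero_add]
  abel

/-- An algebra hom injective on scalars is injective on a hyperbolic Clifford subalgebra. -/
theorem hyp_key {R B D : Type} [CommRing R] [Ring B] [Algebra R B] [Ring D] [Algebra R D]
    (g : B →ₐ[R] D) (hD : Function.Injective (algebraMap R D)) (n : ℕ) :
    ∀ (e f : Fin n → B) (_ : ∀ i, e i * e i = 0) (_ : ∀ i, f i * f i = 0)
      (_ : ∀ i j, e i * e j + e j * e i = 0) (_ : ∀ i j, f i * f j + f j * f i = 0)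
      (_ : ∀ i j, i ≠ j → e i * f j + f j * e i = 0) (_ : ∀ i, e i * f i + f i * e i = 1),
      ∀ x ∈ Algebra.adjoin R (Set.range e ∪ Set.range f), g x = 0 → x = 0 := by
  induction n with
  | zero =>
    intro e f _ _ _ _ _ _ x hx hgx
    rw [Set.range_eq_empty, Set.range_eq_empty, Set.union_empty, Algebra.adjoin_empty,
      Algebra.mem_bot] at hx
    obtain ⟨r, rfl⟩ := hx
    rw [AlgHom.commutes] at hgx
    rw [hD (hgx.trans (map_zero _).symm), map_zero]
  | succ n ih =>
    intro e f he hf hee hff hef h1 x hx hgx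
    obtain ⟨E, hE⟩ : ∃ E, E = e 0 := ⟨_, rfl⟩
    obtain ⟨F, hF⟩ : ∃ F, F = f 0 := ⟨_, rfl⟩
    have hEE : E * E = 0 := hE ▸ he 0
    have hFF : F * F = 0 := hF ▸ hf 0
    have hEF : E * F + F * E = 1 := by rw [hE, hF]; exact h1 0
    have efe : E * (F * E) = E := by
      have : F * E = 1 - E * F := by rw [← hEF]; abel
      rw [this, mul_sub, ← mul_assoc, hEE]; simp
    have fef : F * (E * F) = F := by
      have : E * F = 1 - F * E := by rw [← hEF]; abel
      rw [this, mul_sub, ← mul_assoc, hFF]; simp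
    have ee : ∀ z, E * (E * z) = 0 := fun z => by rw [← mul_assoc, hEE, zero_mul]
    have ff : ∀ z, F * (F * z) = 0 := fun z => by rw [← mul_assoc, hFF, zero_mul]
    obtain ⟨u, hu⟩ : ∃ u, u = E * F - F * E := ⟨_, rfl⟩
    have uE : u * E = E := by rw [hu, sub_mul, mul_assoc, mul_assoc, efe, hEE]; simp
    have Eu : E * u = -E := by rw [hu, mul_sub, ee, efe]; simp
    have uF : u * F = -F := by rw [hu, sub_mul, mul_assoc, mul_assoc, fef, hFF]; simp
    have Fu : F * u = F := by rw [hu, mul_sub, ff, fef]; simp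
    have uu : u * u = 1 := by
      have h : u * u = u * (E * F) - u * (F * E) := by rw [← mul_sub, ← hu]
      rw [h, ← mul_assoc, ← mul_assoc, uE, uF, ← hEF]; simp
    -- facts about elements anticommuting with `E` and `F`
    have anti : ∀ v, E * v + v * E = 0 → F * v + v * F = 0 →
        v * u = u * v ∧ (v * u) * E = E * (v * u) ∧ (v * u) * F = F * (v * u) := by
      intro v hvE hvF
      have a1 : E * v = -(v * E) := eq_neg_of_add_eq_zero_left hvE
      have a2 : F * v = -(v * F) := eq_neg_of_add_eq_zero_left hvF
      refine ⟨?_, ?_, ?_⟩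
      · rw [hu, mul_sub, sub_mul, mul_assoc E, a2, mul_assoc F, a1, mul_neg, mul_neg,
          ← mul_assoc E, ← mul_assoc F, a1, a2]
        simp [mul_assoc]
      · rw [mul_assoc, uE, ← mul_assoc, a1, neg_mul, mul_assoc, Eu]; simp
      · rw [mul_assoc, uF, ← mul_assoc, a2, neg_mul, mul_assoc, Fu]; simp
    have antie : ∀ i : Fin n, E * e i.succ + e i.succ * E = 0 ∧
        F * e i.succ + e i.succ * F = 0 := fun i =>
      ⟨by rw [hE]; exact hee _ _, by
        rw [hF, add_comm]; exact hef _ _ (Fin.succ_ne_zero i)⟩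
    have antif : ∀ i : Fin n, E * f i.succ + f i.succ * E = 0 ∧
        F * f i.succ + f i.succ * F = 0 := fun i =>
      ⟨by rw [hE]; exact hef _ _ (Fin.succ_ne_zero i).symm, by rw [hF]; exact hff _ _⟩
    have ce : ∀ i : Fin n, _ := fun i => anti _ (antie i).1 (antie i).2
    have cf : ∀ i : Fin n, _ := fun i => anti _ (antif i).1 (antif i).2
    have mm : ∀ v w, w * u = u * w → (v * u) * (w * u) = v * w := by
      intro v w hw
      rw [hw, mul_assoc, ← mul_assoc u u, uu, one_mul]
    have ih' := ih (fun i => e i.succ * u) (fun i => f i.succ * u)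
      (fun i => by rw [mm _ _ (ce i).1]; exact he _)
      (fun i => by rw [mm _ _ (cf i).1]; exact hf _)
      (fun i j => by rw [mm _ _ (ce i).1, mm _ _ (ce j).1]; exact hee _ _)
      (fun i j => by rw [mm _ _ (cf i).1, mm _ _ (cf j).1]; exact hff _ _)
      (fun i j hij => by
        rw [mm _ _ (ce i).1, mm _ _ (cf j).1]
        exact hef _ _ (fun h => hij (Fin.succ_injective _ h)))
      (fun i => by rw [mm _ _ (ce i).1, mm _ _ (cf i).1]; exact h1 _)
    obtain ⟨C, hC⟩ : ∃ C, C = Algebra.adjoin R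
      (Set.range (fun i : Fin n => e i.succ * u) ∪ Set.range (fun i : Fin n => f i.succ * u)) :=
      ⟨_, rfl⟩
    rw [← hC] at ih'
    have hCcomm : ∀ c ∈ C, c * E = E * c ∧ c * F = F * c := by
      intro c hc
      rw [hC] at hc
      induction hc using Algebra.adjoin_induction with
      | mem y hy =>
        rcases hy with ⟨i, rfl⟩ | ⟨i, rfl⟩
        · exact (ce i).2
        · exact (cf i).2
      | algebraMap r => exact ⟨Algebra.commutes _ _, Algebra.commutes _ _⟩
      | add a b _ _ ha hb =>
        exact ⟨by rw [add_mul, mul_add, ha.1, hb.1], by rw [add_mul, mul_add, ha.2, hb.2]⟩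
      | mul a b _ _ ha hb =>
        exact ⟨by rw [mul_assoc, hb.1, ← mul_assoc, ha.1, mul_assoc],
          by rw [mul_assoc, hb.2, ← mul_assoc, ha.2, mul_assoc]⟩
    have gen : ∀ v, v * u ∈ C → ∃ a ∈ C, ∃ b ∈ C, ∃ c ∈ C, ∃ d ∈ C,
        v = a * (E * F) + b * E + c * F + d * (F * E) := by
      intro v hv
      refine ⟨v * u, hv, 0, C.zero_mem, 0, C.zero_mem, -(v * u), C.neg_mem hv, ?_⟩
      have : v = (v * u) * u := by rw [mul_assoc, uu, mul_one]
      have h2 : v * u * u = v * u * (E * F) - v * u * (F * E) := by rw [← mul_sub, ← hu]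
      rw [← this] at h2
      rw [zero_mul, zero_mul, add_zero, add_zero, neg_mul, ← sub_eq_add_neg]
      exact h2
    have span : ∃ a ∈ C, ∃ b ∈ C, ∃ c ∈ C, ∃ d ∈ C,
        x = a * (E * F) + b * E + c * F + d * (F * E) := by
      clear hgx
      induction hx using Algebra.adjoin_induction with
      | mem y hy =>
        rcases hy with ⟨i, rfl⟩ | ⟨i, rfl⟩
        · refine Fin.cases ?_ (fun i => ?_) i
          · exact ⟨0, C.zero_mem, 1, C.one_mem, 0, C.zero_mem, 0, C.zero_mem, by simp [hE]⟩
          · apply gen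
            rw [hC]
            exact Algebra.subset_adjoin (Or.inl ⟨i, rfl⟩)
        · refine Fin.cases ?_ (fun i => ?_) i
          · exact ⟨0, C.zero_mem, 0, C.zero_mem, 1, C.one_mem, 0, C.zero_mem, by simp [hF]⟩
          · apply gen
            rw [hC]
            exact Algebra.subset_adjoin (Or.inr ⟨i, rfl⟩)
      | algebraMap r =>
        refine ⟨_, C.algebraMap_mem r, 0, C.zero_mem, 0, C.zero_mem, _, C.algebraMap_mem r, ?_⟩
        simp only [zero_mul, add_zero]
        rw [← mul_add, hEF, mul_one]
      | add y z _ _ hy hz =>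
        obtain ⟨a, ha, b, hb, c, hc, d, hd, rfl⟩ := hy
        obtain ⟨a', ha', b', hb', c', hc', d', hd', rfl⟩ := hz
        refine ⟨a + a', C.add_mem ha ha', b + b', C.add_mem hb hb', c + c', C.add_mem hc hc',
          d + d', C.add_mem hd hd', ?_⟩
        simp only [add_mul]
        abel
      | mul y z _ _ hy hz =>
        exact span_mul_aux C E F hEE hFF hEF (fun c hc => (hCcomm c hc).1)
          (fun c hc => (hCcomm c hc).2) y z hy hz
    obtain ⟨a, ha, b, hb, c, hc, d, hd, hxe⟩ := span
    have z : ∀ p q s t : B, g (p * x * q + s * x * t) = 0 := by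
      intro p q s t
      simp [hgx]
    have hl : ∀ c ∈ C, (∀ z, E * (c * z) = c * (E * z)) ∧ (∀ z, F * (c * z) = c * (F * z)) := by
      intro c hc
      refine ⟨fun z => ?_, fun z => ?_⟩
      · rw [← mul_assoc, ← (hCcomm c hc).1, mul_assoc]
      · rw [← mul_assoc, ← (hCcomm c hc).2, mul_assoc]
    have e3 : ∀ z, E * (F * (E * z)) = E * z := fun z => by
      rw [← mul_assoc F, ← mul_assoc E, efe]
    have f3 : ∀ z, F * (E * (F * z)) = F * z := fun z => by
      rw [← mul_assoc E, ← mul_assoc F, fef]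
    have a0 : a = 0 := by
      apply ih' a ha
      rw [← z (E * F) (E * F) F E]
      congr 1
      rw [hxe]
      simp only [mul_add, add_mul, mul_assoc, (hl _ ha).1, (hl _ ha).2, (hl _ hb).1, (hl _ hb).2,
        (hl _ hc).1, (hl _ hc).2, (hl _ hd).1, (hl _ hd).2, ee, ff, hEE, hFF, efe, fef, e3, f3,
        mul_zero, add_zero, zero_add]
      rw [← mul_add, hEF, mul_one]
    have b0 : b = 0 := by
      apply ih' b hb
      rw [← z (E * F) F F (F * E)]
      congr 1
      rw [hxe]
      simp only [mul_add, add_mul, mul_assoc, (hl _ ha).1, (hl _ ha).2, (hl _ hb).1, (hl _ hb).2,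
        (hl _ hc).1, (hl _ hc).2, (hl _ hd).1, (hl _ hd).2, ee, ff, hEE, hFF, efe, fef, e3, f3,
        mul_zero, add_zero, zero_add]
      rw [← mul_add, hEF, mul_one]
    have c0 : c = 0 := by
      apply ih' c hc
      rw [← z E (E * F) (F * E) E]
      congr 1
      rw [hxe]
      simp only [mul_add, add_mul, mul_assoc, (hl _ ha).1, (hl _ ha).2, (hl _ hb).1, (hl _ hb).2,
        (hl _ hc).1, (hl _ hc).2, (hl _ hd).1, (hl _ hd).2, ee, ff, hEE, hFF, efe, fef, e3, f3,
        mul_zero, add_zero, zero_add]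
      rw [← mul_add, hEF, mul_one]
    have d0 : d = 0 := by
      apply ih' d hd
      rw [← z E F (F * E) (F * E)]
      congr 1
      rw [hxe]
      simp only [mul_add, add_mul, mul_assoc, (hl _ ha).1, (hl _ ha).2, (hl _ hb).1, (hl _ hb).2,
        (hl _ hc).1, (hl _ hc).2, (hl _ hd).1, (hl _ hd).2, ee, ff, hEE, hFF, efe, fef, e3, f3,
        mul_zero, add_zero, zero_add]
      rw [← mul_add, hEF, mul_one]
    rw [hxe, a0, b0, c0, d0]
    simp

theorem hypForm_apply' (R : Type) [CommRing R] (n : ℕ) (x : (Fin n → R) × (Fin n → R)) :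
    hypForm R n x = x.1 ⬝ᵥ x.2 := rfl

theorem hyp_swap (R : Type) [CommRing R] (n : ℕ) (x y : (Fin n → R) × (Fin n → R)) :
    CliffordAlgebra.ι (hypForm R n) x * CliffordAlgebra.ι (hypForm R n) y +
      CliffordAlgebra.ι (hypForm R n) y * CliffordAlgebra.ι (hypForm R n) x =
    algebraMap R _ (x.1 ⬝ᵥ y.2 + y.1 ⬝ᵥ x.2) := by
  rw [CliffordAlgebra.ι_mul_ι_add_swap]
  congr 1
  simp only [QuadraticMap.polar, hypForm_apply', Prod.fst_add, Prod.snd_add, add_dotProduct,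
    dotProduct_add]
  ring

/-- if `R ↪ A`, `ι : R^n ⊕ R^n → A` is an injective linear map and `α` is an
isometry of the hyperbolic form with `ι(x)·ι(α x) = ι(α x)·ι(x) = q(x)·1`, then the algebra
homomorphism `Cl → M_2(A)` extending `x ↦ [[0, ι x], [ι (α x), 0]]` is injective. -/
theorem clifford_embedding_injective (R : Type) [CommRing R] (n : ℕ) (hn : 1 ≤ n)
    (A : Type) [Ring A] [Algebra R A] (hA : Function.Injective (algebraMap R A))
    (emb : ((Fin n → R) × (Fin n → R)) →ₗ[R] A) (hemb : Function.Injective emb)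
    (α : ((Fin n → R) × (Fin n → R)) ≃ₗ[R] ((Fin n → R) × (Fin n → R)))
    (hα : ∀ x, hypForm R n (α x) = hypForm R n x)
    (hmul : ∀ x, emb x * emb (α x) = algebraMap R A (hypForm R n x) ∧
      emb (α x) * emb x = algebraMap R A (hypForm R n x))
    (Φ : CliffordAlgebra (hypForm R n) →ₐ[R] Matrix (Fin 2) (Fin 2) A)
    (hΦ : ∀ x, Φ (CliffordAlgebra.ι (hypForm R n) x) = !![0, emb x; emb (α x), 0]) :
    Function.Injective Φ := by
  have hD : Function.Injective (algebraMap R (Matrix (Fin 2) (Fin 2) A)) := by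
    intro r s h
    have := congrFun (congrFun h 0) 0
    simp only [Matrix.algebraMap_matrix_apply, if_true] at this
    exact hA this
  rw [injective_iff_map_eq_zero]
  intro x
  refine hyp_key Φ hD n
    (fun i => CliffordAlgebra.ι (hypForm R n) (Pi.single i 1, 0))
    (fun i => CliffordAlgebra.ι (hypForm R n) (0, Pi.single i 1)) ?_ ?_ ?_ ?_ ?_ ?_ x ?_
  · intro i
    simp [CliffordAlgebra.ι_sq_scalar, hypForm_apply']
  · intro i
    simp [CliffordAlgebra.ι_sq_scalar, hypForm_apply']
  · intro i j
    simp [hyp_swap]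
  · intro i j
    simp [hyp_swap]
  · intro i j hij
    simp [hyp_swap, hij]
  · intro i
    simp [hyp_swap]
  · have htop : x ∈ (⊤ : Subalgebra R (CliffordAlgebra (hypForm R n))) := Algebra.mem_top
    rw [← CliffordAlgebra.adjoin_range_ι] at htop
    refine Algebra.adjoin_le ?_ htop
    rintro _ ⟨⟨v, w⟩, rfl⟩
    have hvw : ((v, w) : (Fin n → R) × (Fin n → R)) =
        ∑ i, v i • ((Pi.single i 1, 0) : (Fin n → R) × (Fin n → R)) +
        ∑ i, w i • ((0, Pi.single i 1) : (Fin n → R) × (Fin n → R)) := by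
      ext k <;> simp [Prod.fst_sum, Prod.snd_sum, Finset.sum_apply, Pi.single_apply]
    rw [hvw, map_add, map_sum, map_sum]
    simp only [map_smul]
    refine Subalgebra.add_mem _ (Subalgebra.sum_mem _ fun i _ => Subalgebra.smul_mem _ ?_ _)
      (Subalgebra.sum_mem _ fun i _ => Subalgebra.smul_mem _ ?_ _)
    · exact Algebra.subset_adjoin (Or.inl ⟨i, rfl⟩)
    · exact Algebra.subset_adjoin (Or.inr ⟨i, rfl⟩)
end
end

section
/- Let R be a commutative ring, n ≥ 1, and let X = S_n(v,w) and Y = S_n(v',w') be Suslin matrices in M_{2^n}(R). Then X·Y·X is again a Suslin matrix, i.e. there exist v'', w'' ∈ R^{n+1} with X·Y·X = S_n(v'',w''); moreover its conjugate satisfies S̄_n(v'',w'') = X̄·Ȳ·X̄. -/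
open Matrix

noncomputable section

lemma sus_lin (R : Type) [CommRing R] (n : ℕ) : ∀ (a b : R) (v w v' w' : Fin (n + 1) → R),
    sus R n (a • v + b • v') (a • w + b • w') = a • sus R n v w + b • sus R n v' w' := by
  induction n with
  | zero =>
    intro a b v w v' w'
    simp [sus, add_smul, mul_smul]
  | succ n ih =>
    intro a b v w v' w'
    have h : ∀ x y : Fin (n + 1 + 1) → R, (a • x + b • y) ∘ Fin.succ
        = a • (x ∘ Fin.succ) + b • (y ∘ Fin.succ) := fun x y => rfl
    simp only [sus, h, ih]
    apply (Matrix.reindex (pow2Equiv n) (pow2Equiv n)).symm.injective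
    ext i j
    rcases i with i | i <;> rcases j with j | j <;>
      simp [Matrix.reindex_apply, Matrix.submatrix_apply, add_mul, mul_assoc] <;> ring

lemma dot_tail {R : Type} [CommRing R] {n : ℕ} (v w : Fin (n + 1 + 1) → R) :
    v ⬝ᵥ w = v 0 * w 0 + (v ∘ Fin.succ) ⬝ᵥ (w ∘ Fin.succ) := by
  simp [dotProduct, Fin.sum_univ_succ (n := n + 1)]

lemma sus_norm (R : Type) [CommRing R] (n : ℕ) : ∀ (v w : Fin (n + 1) → R),
    sus R n v w * susBar R n v w = (v ⬝ᵥ w) • 1 ∧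
    susBar R n v w * sus R n v w = (v ⬝ᵥ w) • 1 := by
  induction n with
  | zero =>
    intro v w
    simp [sus, susBar, dotProduct, smul_smul, mul_comm]
  | succ n ih =>
    intro v w
    obtain ⟨h1, h2⟩ := ih (v ∘ Fin.succ) (w ∘ Fin.succ)
    have key : ((v ⬝ᵥ w) • 1 : Matrix (Fin (2 ^ (n + 1))) (Fin (2 ^ (n + 1))) R)
        = Matrix.reindex (pow2Equiv n) (pow2Equiv n)
          (Matrix.fromBlocks ((v ⬝ᵥ w) • 1) 0 0 ((v ⬝ᵥ w) • 1)) := by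
      have : (Matrix.fromBlocks ((v ⬝ᵥ w) • 1) 0 0 ((v ⬝ᵥ w) • 1) :
          Matrix (Fin (2 ^ n) ⊕ Fin (2 ^ n)) (Fin (2 ^ n) ⊕ Fin (2 ^ n)) R)
          = (v ⬝ᵥ w) • 1 := by
        rw [← Matrix.fromBlocks_one, Matrix.fromBlocks_smul]; simp
      rw [this]
      simp [Matrix.reindex_apply, Matrix.submatrix_smul]
    have hd := dot_tail v w
    rw [key]
    unfold susBar at *
    simp only [sus, Matrix.reindex_apply, Matrix.transpose_submatrix, Matrix.submatrix_mul_equiv,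
      Matrix.fromBlocks_transpose, Matrix.fromBlocks_multiply]
    constructor
    · congr 1
      simp only [Matrix.transpose_smul, Matrix.transpose_one, Matrix.transpose_neg,
        Matrix.transpose_transpose, Matrix.smul_mul, Matrix.mul_smul, Matrix.one_mul,
        Matrix.mul_one, Matrix.neg_mul, Matrix.mul_neg, h1, h2, hd, add_smul, smul_smul,
        smul_neg, neg_neg]
      congr 1 <;> simp [mul_comm, add_comm]
    · congr 1
      simp only [Matrix.transpose_smul, Matrix.transpose_one, Matrix.transpose_neg,
        Matrix.transpose_transpose, Matrix.smul_mul, Matrix.mul_smul, Matrix.one_mul,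
        Matrix.mul_one, Matrix.neg_mul, Matrix.mul_neg, h1, h2, hd, add_smul, smul_smul,
        smul_neg, neg_neg]
      congr 1 <;> simp [mul_comm, add_comm]

lemma susBar_lin (R : Type) [CommRing R] (n : ℕ) (a b : R) (v w v' w' : Fin (n + 1) → R) :
    susBar R n (a • v + b • v') (a • w + b • w') = a • susBar R n v w + b • susBar R n v' w' := by
  simp [susBar, sus_lin]

lemma sus_polar (R : Type) [CommRing R] (n : ℕ) (v w v' w' : Fin (n + 1) → R) :
    sus R n v w * susBar R n v' w' + sus R n v' w' * susBar R n v w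
      = (v ⬝ᵥ w' + v' ⬝ᵥ w) • 1 := by
  have h := (sus_norm R n ((1 : R) • v + (1 : R) • v') ((1 : R) • w + (1 : R) • w')).1
  rw [sus_lin, susBar_lin] at h
  simp only [one_smul, add_mul, mul_add, dotProduct_add, add_dotProduct, add_smul,
    (sus_norm R n _ _).1] at h
  rw [add_smul]
  generalize sus R n v w * susBar R n v' w' = A at *
  generalize sus R n v' w' * susBar R n v w = B at *
  have h' := sub_eq_zero.2 h
  rw [← sub_eq_zero, ← h']
  abel

lemma sandwich_bar (R : Type) [CommRing R] (n : ℕ) (v w v' w' : Fin (n + 1) → R) :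
    ∃ v'' w'' : Fin (n + 1) → R,
      sus R n v w * susBar R n v' w' * sus R n v w = sus R n v'' w'' ∧
      susBar R n v'' w'' = susBar R n v w * sus R n v' w' * susBar R n v w := by
  have hp := sus_polar R n v w v' w'
  obtain ⟨h1, h2⟩ := sus_norm R n v w
  refine ⟨(v ⬝ᵥ w' + v' ⬝ᵥ w) • v + (-(v ⬝ᵥ w)) • v',
    (v ⬝ᵥ w' + v' ⬝ᵥ w) • w + (-(v ⬝ᵥ w)) • w', ?_, ?_⟩
  · rw [sus_lin, eq_sub_of_add_eq hp, sub_mul, Matrix.mul_assoc (sus R n v' w'), h2]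
    simp [sub_eq_add_neg]
  · rw [susBar_lin, Matrix.mul_assoc, eq_sub_of_add_eq' hp, mul_sub, ← Matrix.mul_assoc, h2]
    simp [sub_eq_add_neg]

lemma sus_eq_bar (R : Type) [CommRing R] (n : ℕ) (v w : Fin (n + 1 + 1) → R) :
    ∃ v' w' : Fin (n + 1 + 1) → R, sus R (n + 1) v w = susBar R (n + 1) v' w' ∧
      susBar R (n + 1) v w = sus R (n + 1) v' w' := by
  have hneg : ∀ x y : Fin (n + 1) → R, sus R n (-x) (-y) = - sus R n x y := by
    intro x y
    have := sus_lin R n (-1) 0 x y 0 0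
    simpa using this
  have hc : ∀ (a : R) (x : Fin (n + 1) → R),
      (Fin.cons a x : Fin (n + 1 + 1) → R) ∘ Fin.succ = x := fun a x => by ext; simp
  refine ⟨Fin.cons (w 0) (-(v ∘ Fin.succ)), Fin.cons (v 0) (-(w ∘ Fin.succ)), ?_, ?_⟩ <;>
    simp [susBar, sus, hc, hneg, Matrix.fromBlocks_transpose]

/-- Jose–Rao fundamental lemma: if `X = S_n(v,w)` and `Y = S_n(v',w')` are
Suslin matrices (`n ≥ 1`), then `X·Y·X` is again a Suslin matrix `S_n(v'',w'')`, and moreover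
`S̄_n(v'',w'') = X̄·Ȳ·X̄`. -/
theorem suslin_sandwich (R : Type) [CommRing R] (n : ℕ) (hn : 1 ≤ n)
    (v w v' w' : Fin (n + 1) → R) :
    ∃ v'' w'' : Fin (n + 1) → R,
      sus R n v w * sus R n v' w' * sus R n v w = sus R n v'' w'' ∧
      susBar R n v'' w'' = susBar R n v w * susBar R n v' w' * susBar R n v w := by
  obtain ⟨m, rfl⟩ : ∃ m, n = m + 1 := ⟨n - 1, by omega⟩
  obtain ⟨x, y, h1, h2⟩ := sus_eq_bar R m v' w'
  rw [h1, h2]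
  exact sandwich_bar R (m + 1) v w x y
end
end

section
/- Let R be a commutative ring and n ≥ 3 odd. The first-projection map (g₁, g₂) ↦ g₁ defines a group isomorphism from Spin_{2n}(R) onto SG_{n-1}(R), with inverse g ↦ (g, (g*)^{−1}). -/
open Matrix

noncomputable section

theorem sus_succ (R : Type) [CommRing R] (n : ℕ) (v w : Fin (n + 2) → R) :
    sus R (n + 1) v w = Matrix.reindex (pow2Equiv n) (pow2Equiv n)
        (Matrix.fromBlocks (v 0 • 1) (sus R n (v ∘ Fin.succ) (w ∘ Fin.succ))
          (-(sus R n (w ∘ Fin.succ) (v ∘ Fin.succ))ᵀ) (w 0 • 1)) := rfl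

theorem reindex_mul' {R : Type} [CommRing R] {a b : Type} [Fintype a] [Fintype b]
    (e : a ≃ b) (M N : Matrix a a R) :
    Matrix.reindex e e M * Matrix.reindex e e N = Matrix.reindex e e (M * N) := by
  simp [Matrix.reindex_apply, Matrix.submatrix_mul_equiv]

theorem reindex_one' {R : Type} [CommRing R] {a b : Type} [DecidableEq a] [DecidableEq b]
    (e : a ≃ b) : Matrix.reindex e e (1 : Matrix a a R) = 1 := by
  simp [Matrix.reindex_apply]

theorem reindex_T {R : Type} [CommRing R] {a b : Type}
    (e : a ≃ b) (M : Matrix a a R) :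
    (Matrix.reindex e e M)ᵀ = Matrix.reindex e e Mᵀ := rfl

theorem reindex_add' {R : Type} [CommRing R] {a b : Type}
    (e : a ≃ b) (M N : Matrix a a R) :
    Matrix.reindex e e M + Matrix.reindex e e N = Matrix.reindex e e (M + N) := rfl

theorem reindex_smul' {R : Type} [CommRing R] {a b : Type}
    (e : a ≃ b) (c : R) (M : Matrix a a R) :
    c • Matrix.reindex e e M = Matrix.reindex e e (c • M) := rfl

theorem reindex_neg' {R : Type} [CommRing R] {a b : Type}
    (e : a ≃ b) (M : Matrix a a R) :
    -Matrix.reindex e e M = Matrix.reindex e e (-M) := rfl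

theorem sus_add (R : Type) [CommRing R] (n : ℕ) (v w v' w' : Fin (n + 1) → R) :
    sus R n (v + v') (w + w') = sus R n v w + sus R n v' w' := by
  induction n with
  | zero => simp [sus, add_smul]
  | succ n ih =>
    have h1 : (v + v') ∘ Fin.succ = v ∘ Fin.succ + v' ∘ Fin.succ := rfl
    have h2 : (w + w') ∘ Fin.succ = w ∘ Fin.succ + w' ∘ Fin.succ := rfl
    rw [sus_succ, sus_succ, sus_succ, h1, h2, ih, ih]
    rw [reindex_add', Matrix.fromBlocks_add]
    simp only [Pi.add_apply, add_smul, Matrix.transpose_add, neg_add]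

theorem sus_smul (R : Type) [CommRing R] (n : ℕ) (c : R) (v w : Fin (n + 1) → R) :
    sus R n (c • v) (c • w) = c • sus R n v w := by
  induction n with
  | zero => simp [sus, mul_smul]
  | succ n ih =>
    have h1 : (c • v) ∘ Fin.succ = c • (v ∘ Fin.succ) := rfl
    have h2 : (c • w) ∘ Fin.succ = c • (w ∘ Fin.succ) := rfl
    rw [sus_succ, sus_succ, h1, h2, ih, ih]
    rw [reindex_smul', Matrix.fromBlocks_smul]
    simp only [Pi.smul_apply, smul_assoc, Matrix.transpose_smul, smul_neg]

theorem sus_inj_aux (R : Type) [CommRing R] (n : ℕ) (v w v' w' : Fin (n + 1) → R)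
    (h : sus R n v w = sus R n v' w') (h' : sus R n w v = sus R n w' v') :
    v = v' ∧ w = w' := by
  induction n with
  | zero =>
    have e1 := congrFun (congrFun h 0) 0
    have e2 := congrFun (congrFun h' 0) 0
    simp [sus] at e1 e2
    constructor <;> (ext i; fin_cases i; assumption)
  | succ n ih =>
    rw [sus_succ, sus_succ] at h
    have h2 := (Matrix.reindex (pow2Equiv n) (pow2Equiv n)).injective h
    obtain ⟨ha, hb, hc, hd⟩ := Matrix.fromBlocks_inj.1 h2
    have e1 := congrFun (congrFun ha 0) 0
    have e2 := congrFun (congrFun hd 0) 0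
    simp at e1 e2
    obtain ⟨i1, i2⟩ := ih _ _ _ _ hb (Matrix.transpose_injective (neg_injective hc))
    constructor
    · ext i
      refine Fin.cases e1 (fun j => congrFun i1 j) i
    · ext i
      refine Fin.cases e2 (fun j => congrFun i2 j) i

theorem sus_inj (R : Type) [CommRing R] (n : ℕ) (hn : 1 ≤ n) (v w v' w' : Fin (n + 1) → R)
    (h : sus R n v w = sus R n v' w') : v = v' ∧ w = w' := by
  obtain ⟨n, rfl⟩ : ∃ k, n = k + 1 := ⟨n - 1, by omega⟩
  rw [sus_succ, sus_succ] at h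
  have h2 := (Matrix.reindex (pow2Equiv n) (pow2Equiv n)).injective h
  obtain ⟨ha, hb, hc, hd⟩ := Matrix.fromBlocks_inj.1 h2
  have e1 := congrFun (congrFun ha 0) 0
  have e2 := congrFun (congrFun hd 0) 0
  simp at e1 e2
  obtain ⟨i1, i2⟩ := sus_inj_aux R n _ _ _ _ hb (Matrix.transpose_injective (neg_injective hc))
  constructor
  · ext i
    refine Fin.cases e1 (fun j => congrFun i1 j) i
  · ext i
    refine Fin.cases e2 (fun j => congrFun i2 j) i

theorem sus_mul_bar (R : Type) [CommRing R] (n : ℕ) (v w : Fin (n + 1) → R) :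
    sus R n v w * (sus R n w v)ᵀ = (v ⬝ᵥ w) • 1 ∧
    (sus R n w v)ᵀ * sus R n v w = (v ⬝ᵥ w) • 1 := by
  induction n with
  | zero => simp [sus, dotProduct, smul_smul, mul_comm]
  | succ n ih =>
    obtain ⟨i1, i2⟩ := ih (v ∘ Fin.succ) (w ∘ Fin.succ)
    have hd : v ⬝ᵥ w = v 0 * w 0 + (v ∘ Fin.succ) ⬝ᵥ (w ∘ Fin.succ) := by
      simp [dotProduct, Fin.sum_univ_succ]
    rw [sus_succ, sus_succ, reindex_T, reindex_mul', reindex_mul',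
      Matrix.fromBlocks_transpose, Matrix.fromBlocks_multiply, Matrix.fromBlocks_multiply, hd]
    have one : (1 : Matrix (Fin (2 ^ (n+1))) (Fin (2 ^ (n+1))) R) =
      Matrix.reindex (pow2Equiv n) (pow2Equiv n) (Matrix.fromBlocks 1 0 0 1) := by
      rw [Matrix.fromBlocks_one, reindex_one']
    have sm : ∀ c : R, c • (1 : Matrix (Fin (2 ^ (n+1))) (Fin (2 ^ (n+1))) R) =
      Matrix.reindex (pow2Equiv n) (pow2Equiv n) (Matrix.fromBlocks (c • 1) 0 0 (c • 1)) := by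
      intro c
      rw [one]
      rw [reindex_smul', Matrix.fromBlocks_smul]
      simp
    rw [sm]
    simp [i1, i2, smul_smul, add_smul, mul_comm, add_comm]

theorem sus_e0 (R : Type) [CommRing R] (n : ℕ) :
    (Pi.single 0 1 : Fin (n + 1) → R) ⬝ᵥ Pi.single 0 1 = 1 := by
  simp

theorem J_props (R : Type) [CommRing R] (n : ℕ) :
    Jmat R n * (Jmat R n)ᵀ = 1 ∧ ((Jmat R n)ᵀ = Jmat R n ∨ (Jmat R n)ᵀ = - Jmat R n) := by
  induction n with
  | zero => simp [Jmat]
  | succ n ih =>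
    obtain ⟨h1, h2⟩ := ih
    rw [Jmat]
    split_ifs
    · rw [reindex_T, reindex_mul', Matrix.fromBlocks_transpose, Matrix.fromBlocks_multiply]
      constructor
      · simp [h1]
      · rcases h2 with h | h
        · left; simp [h]
        · right
          rw [h];          rw [reindex_neg', Matrix.fromBlocks_neg]
          simp [h]
    · rw [reindex_T, reindex_mul', Matrix.fromBlocks_transpose, Matrix.fromBlocks_multiply]
      constructor
      · simp [h1]
      · rcases h2 with h | h
        · right
          rw [reindex_neg', Matrix.fromBlocks_neg]
          simp [h]
        · left; simp [h]

theorem invol_mul (R : Type) [CommRing R] (n : ℕ) (A B : Matrix (Fin (2 ^ n)) (Fin (2 ^ n)) R) :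
    invol R n (A * B) = invol R n B * invol R n A := by
  have h : (Jmat R n)ᵀ * Jmat R n = 1 := mul_eq_one_comm.1 (J_props R n).1
  unfold invol
  rw [Matrix.transpose_mul]
  calc _ = Jmat R n * Bᵀ * 1 * Aᵀ * (Jmat R n)ᵀ := by simp only [mul_one, mul_assoc]
    _ = _ := by rw [← h]; simp only [mul_assoc]

theorem invol_one (R : Type) [CommRing R] (n : ℕ) : invol R n 1 = 1 := by
  simp [invol, (J_props R n).1]

theorem invol_invol (R : Type) [CommRing R] (n : ℕ) (A : Matrix (Fin (2 ^ n)) (Fin (2 ^ n)) R) :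
    invol R n (invol R n A) = A := by
  obtain ⟨h1, h2⟩ := J_props R n
  have h3 := mul_eq_one_comm.1 h1
  unfold invol
  simp only [Matrix.transpose_mul, Matrix.transpose_transpose]
  have key : ∀ K : Matrix (Fin (2 ^ n)) (Fin (2 ^ n)) R, K * Kᵀ = 1 → (Kᵀ = K ∨ Kᵀ = -K) →
      K * (K * (A * Kᵀ)) * Kᵀ = A := by
    rintro K hK (h | h)
    · rw [h] at hK ⊢
      rw [← mul_assoc K K, hK, one_mul, mul_assoc, hK, mul_one]
    · rw [h] at hK ⊢
      have : K * K = -1 := by rw [← hK]; simp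
      rw [← mul_assoc K K, this]
      simp [mul_assoc, this]
  exact key _ h1 h2

theorem diag_mul (R : Type) [CommRing R] (m : ℕ)
    (a b c d : Matrix (Fin (2 ^ m)) (Fin (2 ^ m)) R) :
    diagBlock R m a b * diagBlock R m c d = diagBlock R m (a * c) (b * d) := by
  simp only [diagBlock]
  rw [reindex_mul', Matrix.fromBlocks_multiply]; simp

theorem diag_one (R : Type) [CommRing R] (m : ℕ) : diagBlock R m 1 1 = 1 := by
  simp only [diagBlock]
  rw [Matrix.fromBlocks_one, reindex_one']

theorem diag_eq_one (R : Type) [CommRing R] (m : ℕ)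
    (a b : Matrix (Fin (2 ^ m)) (Fin (2 ^ m)) R) :
    diagBlock R m a b = 1 ↔ a = 1 ∧ b = 1 := by
  rw [← diag_one]
  simp only [diagBlock]
  rw [(Matrix.reindex (pow2Equiv m) (pow2Equiv m)).injective.eq_iff, Matrix.fromBlocks_inj]
  simp

theorem diag_inv (R : Type) [CommRing R] (m : ℕ)
    (a b : Matrix (Fin (2 ^ m)) (Fin (2 ^ m)) R) (ha : IsUnit a) (hb : IsUnit b) :
    (diagBlock R m a b)⁻¹ = diagBlock R m a⁻¹ b⁻¹ := by
  apply Matrix.inv_eq_right_inv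
  rw [diag_mul, diag_eq_one]
  exact ⟨Matrix.mul_nonsing_inv _ ((Matrix.isUnit_iff_isUnit_det _).1 ha),
    Matrix.mul_nonsing_inv _ ((Matrix.isUnit_iff_isUnit_det _).1 hb)⟩

theorem invol_diag (R : Type) [CommRing R] (m : ℕ) (hodd : Odd (m + 1))
    (a b : Matrix (Fin (2 ^ m)) (Fin (2 ^ m)) R) :
    invol R (m + 1) (diagBlock R m a b) = diagBlock R m (invol R m b) (invol R m a) := by
  simp only [diagBlock, invol]
  rw [Jmat, if_neg (Nat.not_even_iff_odd.2 hodd)]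
  simp only [reindex_T, reindex_mul', Matrix.fromBlocks_transpose, Matrix.fromBlocks_multiply]
  simp

theorem conj_phi (R : Type) [CommRing R] (m : ℕ)
    (a b : Matrix (Fin (2 ^ m)) (Fin (2 ^ m)) R) (ha : IsUnit a) (hb : IsUnit b)
    (v w v' w' : Fin (m + 1) → R) :
    diagBlock R m a b * phiMat R m v w * (diagBlock R m a b)⁻¹ = phiMat R m v' w' ↔
    a * sus R m v w * b⁻¹ = sus R m v' w' ∧ b * susBar R m v w * a⁻¹ = susBar R m v' w' := by
  rw [diag_inv R m a b ha hb]
  simp only [diagBlock, phiMat]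
  rw [reindex_mul', reindex_mul', (Matrix.reindex (pow2Equiv m) (pow2Equiv m)).injective.eq_iff,
    Matrix.fromBlocks_multiply, Matrix.fromBlocks_multiply, Matrix.fromBlocks_inj]
  simp

theorem smul_one_inj (R : Type) [CommRing R] (m : ℕ) (a b : R)
    (h : a • (1 : Matrix (Fin (2 ^ m)) (Fin (2 ^ m)) R) = b • 1) : a = b := by
  have := congrFun (congrFun h 0) 0
  simpa using this

theorem spin_star (R : Type) [CommRing R] (m : ℕ) (hodd : Odd (m + 1))
    (p : Matrix (Fin (2 ^ m)) (Fin (2 ^ m)) R × Matrix (Fin (2 ^ m)) (Fin (2 ^ m)) R)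
    (hp : p ∈ SpinPair R m) : p.1 * invol R m p.2 = 1 ∧ p.2 * invol R m p.1 = 1 := by
  have := hp.2.2.1
  rwa [invol_diag R m hodd, diag_mul, diag_eq_one] at this

theorem spin_to_SG (R : Type) [CommRing R] (m : ℕ) (hm : 2 ≤ m) (hodd : Odd (m + 1))
    (p : Matrix (Fin (2 ^ m)) (Fin (2 ^ m)) R × Matrix (Fin (2 ^ m)) (Fin (2 ^ m)) R)
    (hp : p ∈ SpinPair R m) : p.1 ∈ SGSet R m := by
  obtain ⟨s1, s2⟩ := spin_star R m hodd p hp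
  obtain ⟨u1, u2, -, him⟩ := hp
  have hinv : p.2⁻¹ = invol R m p.1 := Matrix.inv_eq_right_inv s2
  have key : ∀ v w : Fin (m + 1) → R, ∃ v' w' : Fin (m + 1) → R,
      p.1 * sus R m v w * invol R m p.1 = sus R m v' w' ∧ v' ⬝ᵥ w' = v ⬝ᵥ w := by
    intro v w
    have : diagBlock R m p.1 p.2 * phiMat R m v w * (diagBlock R m p.1 p.2)⁻¹ ∈ PhiSet R m := by
      rw [← him]; exact ⟨_, ⟨v, w, rfl⟩, rfl⟩
    obtain ⟨v', w', h⟩ := this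
    rw [conj_phi R m _ _ u1 u2] at h
    obtain ⟨h1, h2⟩ := h
    refine ⟨v', w', by rw [← hinv, h1], ?_⟩
    apply smul_one_inj R m
    rw [← (sus_mul_bar R m v' w').1]
    change _ * susBar R m v' w' = _
    rw [← h1, ← h2]
    have e1 : p.2⁻¹ * p.2 = 1 :=
      Matrix.nonsing_inv_mul _ ((Matrix.isUnit_iff_isUnit_det _).1 u2)
    have e2 : p.1 * p.1⁻¹ = 1 :=
      Matrix.mul_nonsing_inv _ ((Matrix.isUnit_iff_isUnit_det _).1 u1)
    calc _ = p.1 * (sus R m v w * (p.2⁻¹ * p.2) * susBar R m v w) * p.1⁻¹ := by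
          simp only [mul_assoc]
      _ = _ := by
          rw [e1, mul_one, susBar, (sus_mul_bar R m v w).1]
          simp [e2]
  refine ⟨⟨u1, ?_⟩, ?_⟩
  · rintro S ⟨v, w, rfl⟩
    obtain ⟨v', w', h, -⟩ := key v w
    exact ⟨v', w', h⟩
  · intro v w v' w' h
    obtain ⟨v'', w'', h1, h2⟩ := key v w
    rw [h] at h1
    obtain ⟨rfl, rfl⟩ := sus_inj R m (by omega) _ _ _ _ h1
    exact h2

theorem dot_polar (R : Type) [CommRing R] {k : ℕ} (a b c d : Fin k → R) :
    (a + c) ⬝ᵥ (b + d) = a ⬝ᵥ b + c ⬝ᵥ d + (a ⬝ᵥ d + c ⬝ᵥ b) := by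
  simp only [add_dotProduct, dotProduct_add]; ring

/-- an isometry of the hyperbolic space is surjective -/
theorem isometry_surj (R : Type) [CommRing R] {k : ℕ}
    (L : ((Fin k → R) × (Fin k → R)) →ₗ[R] ((Fin k → R) × (Fin k → R)))
    (hL : ∀ x, (L x).1 ⬝ᵥ (L x).2 = x.1 ⬝ᵥ x.2) : Function.Surjective L := by
  have hB : ∀ x y, (L x).1 ⬝ᵥ (L y).2 + (L y).1 ⬝ᵥ (L x).2 = x.1 ⬝ᵥ y.2 + y.1 ⬝ᵥ x.2 := by
    intro x y
    have h := hL (x + y)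
    rw [map_add] at h
    simp only [Prod.fst_add, Prod.snd_add] at h
    rw [dot_polar, dot_polar, hL, hL] at h
    exact add_left_cancel h
  let L' : ((Fin k → R) × (Fin k → R)) →ₗ[R] ((Fin k → R) × (Fin k → R)) :=
    { toFun := fun y =>
        (fun i => y.1 ⬝ᵥ (L (0, Pi.single i 1)).2 + (L (0, Pi.single i 1)).1 ⬝ᵥ y.2,
         fun i => y.1 ⬝ᵥ (L (Pi.single i 1, 0)).2 + (L (Pi.single i 1, 0)).1 ⬝ᵥ y.2)
      map_add' := by
        intro x y
        ext i <;> simp [add_dotProduct, dotProduct_add] <;> ring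
      map_smul' := by
        intro c x
        ext i <;> simp [mul_add] }
  have h1 : L' * L = 1 := by
    apply LinearMap.ext
    intro x
    change ((fun i => _, fun i => _) : (Fin k → R) × (Fin k → R)) = x
    ext i <;> simp only [hB] <;> simp
  have h2 : L * L' = 1 := mul_eq_one_comm.1 h1
  intro y
  exact ⟨L' y, by simpa using LinearMap.congr_fun h2 y⟩

theorem SG_to_spin (R : Type) [CommRing R] (m : ℕ) (hm : 2 ≤ m) (hodd : Odd (m + 1))
    (g : Matrix (Fin (2 ^ m)) (Fin (2 ^ m)) R) (hg : g ∈ SGSet R m) :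
    (g, (invol R m g)⁻¹) ∈ SpinPair R m := by
  obtain ⟨⟨ug, hG⟩, hl⟩ := hg
  have g1 : g * g⁻¹ = 1 := Matrix.mul_nonsing_inv _ ((Matrix.isUnit_iff_isUnit_det _).1 ug)
  have s1 : invol R m g⁻¹ * invol R m g = 1 := by rw [← invol_mul, g1, invol_one]
  have s2 := mul_eq_one_comm.1 s1
  have hinv : (invol R m g)⁻¹ = invol R m g⁻¹ := Matrix.inv_eq_right_inv s2
  rw [hinv]
  have u2 : IsUnit (invol R m g⁻¹) := IsUnit.of_mul_eq_one _ s1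
  have hinv2 : (invol R m g⁻¹)⁻¹ = invol R m g := Matrix.inv_eq_right_inv s1
  -- the linear map
  have ex : ∀ x : (Fin (m + 1) → R) × (Fin (m + 1) → R),
      ∃ y : (Fin (m + 1) → R) × (Fin (m + 1) → R),
        g * sus R m x.1 x.2 * invol R m g = sus R m y.1 y.2 := by
    intro x
    obtain ⟨v, w, h⟩ := hG _ ⟨x.1, x.2, rfl⟩
    exact ⟨(v, w), h⟩
  choose f hf using ex
  have uniq : ∀ x y : (Fin (m + 1) → R) × (Fin (m + 1) → R),
      sus R m x.1 x.2 = sus R m y.1 y.2 → x = y := by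
    intro x y h
    obtain ⟨a, b⟩ := sus_inj R m (by omega) _ _ _ _ h
    exact Prod.ext a b
  let L : ((Fin (m + 1) → R) × (Fin (m + 1) → R)) →ₗ[R]
      ((Fin (m + 1) → R) × (Fin (m + 1) → R)) :=
    { toFun := f
      map_add' := by
        intro x y
        apply uniq
        rw [← hf, Prod.fst_add, Prod.snd_add, Prod.fst_add, Prod.snd_add, sus_add, sus_add,
          ← hf, ← hf, mul_add, add_mul]
      map_smul' := by
        intro c x
        apply uniq
        rw [← hf, RingHom.id_apply, Prod.smul_fst, Prod.smul_snd, Prod.smul_fst, Prod.smul_snd,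
          sus_smul, sus_smul, ← hf, mul_smul_comm, smul_mul_assoc] }
  have hfL : ∀ x, g * sus R m x.1 x.2 * invol R m g = sus R m (L x).1 (L x).2 := hf
  have hq : ∀ x, (L x).1 ⬝ᵥ (L x).2 = x.1 ⬝ᵥ x.2 := fun x => hl _ _ _ _ (hfL x)
  have hsurj := isometry_surj R L hq
  -- the conjugate relation
  let D : ((Fin (m + 1) → R) × (Fin (m + 1) → R)) → Matrix (Fin (2 ^ m)) (Fin (2 ^ m)) R :=
    fun x => invol R m g⁻¹ * susBar R m x.1 x.2 * g⁻¹ - susBar R m (L x).1 (L x).2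
  have hDadd : ∀ x y, D (x + y) = D x + D y := by
    intro x y
    simp only [D, susBar, map_add, Prod.fst_add, Prod.snd_add, sus_add, Matrix.transpose_add,
      mul_add, add_mul]
    abel
  have hD0 : ∀ x, sus R m (L x).1 (L x).2 * D x = 0 := by
    intro x
    simp only [D]
    rw [mul_sub, susBar, susBar, (sus_mul_bar R m _ _).1, hq, ← hfL, sub_eq_zero]
    calc _ = g * (sus R m x.1 x.2 * (invol R m g * invol R m g⁻¹) * (sus R m x.2 x.1)ᵀ) * g⁻¹ := by
          simp only [mul_assoc]
      _ = _ := by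
          rw [s2, mul_one, (sus_mul_bar R m _ _).1]
          simp [g1]
  let t : (Fin (m + 1) → R) × (Fin (m + 1) → R) := (Pi.single 0 1, Pi.single 0 1)
  have hcancel : ∀ M : Matrix (Fin (2 ^ m)) (Fin (2 ^ m)) R,
      sus R m (L t).1 (L t).2 * M = 0 → M = 0 := by
    intro M hM
    have h1 := (sus_mul_bar R m (L t).1 (L t).2).2
    rw [hq, sus_e0, one_smul] at h1
    rw [← one_mul M, ← h1, mul_assoc, hM, mul_zero]
  have hDt : D t = 0 := hcancel _ (hD0 t)
  have hD : ∀ x, D x = 0 := by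
    intro x
    apply hcancel
    have h := hD0 (x + t)
    rw [hDadd, hDt, add_zero, map_add, Prod.fst_add, Prod.snd_add, sus_add, add_mul, hD0,
      zero_add] at h
    exact h
  have hconj : ∀ x : (Fin (m + 1) → R) × (Fin (m + 1) → R),
      diagBlock R m g (invol R m g⁻¹) * phiMat R m x.1 x.2 *
        (diagBlock R m g (invol R m g⁻¹))⁻¹ = phiMat R m (L x).1 (L x).2 := by
    intro x
    rw [conj_phi R m _ _ ug u2, hinv2]
    exact ⟨hfL x, sub_eq_zero.1 (hD x)⟩
  refine ⟨ug, u2, ?_, ?_⟩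
  · rw [invol_diag R m hodd, diag_mul, diag_eq_one, invol_invol]
    exact ⟨g1, s1⟩
  · apply Set.Subset.antisymm
    · rintro _ ⟨_, ⟨v, w, rfl⟩, rfl⟩
      exact ⟨_, _, hconj (v, w)⟩
    · rintro _ ⟨v, w, rfl⟩
      obtain ⟨x, hx⟩ := hsurj (v, w)
      refine ⟨_, ⟨x.1, x.2, rfl⟩, ?_⟩
      simp only [hconj, hx]

theorem spin_mul (R : Type) [CommRing R] (m : ℕ) 
    (p : Matrix (Fin (2 ^ m)) (Fin (2 ^ m)) R × Matrix (Fin (2 ^ m)) (Fin (2 ^ m)) R)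
    (hp : p ∈ SpinPair R m)
    (q : Matrix (Fin (2 ^ m)) (Fin (2 ^ m)) R × Matrix (Fin (2 ^ m)) (Fin (2 ^ m)) R)
    (hq : q ∈ SpinPair R m) : (p.1 * q.1, p.2 * q.2) ∈ SpinPair R m := by
  obtain ⟨a1, a2, a3, a4⟩ := hp
  obtain ⟨b1, b2, b3, b4⟩ := hq
  refine ⟨a1.mul b1, a2.mul b2, ?_, ?_⟩
  · simp only [← diag_mul, invol_mul]
    rw [mul_assoc, ← mul_assoc (diagBlock R m q.1 q.2), b3, one_mul, a3]
  · simp only [← diag_mul, Matrix.mul_inv_rev]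
    conv_rhs => rw [← a4, ← b4, Set.image_image]
    simp only [mul_assoc]

/-- for odd `n ≥ 3` (here `n = m + 1`), the first projection
`(g₁, g₂) ↦ g₁` is a group isomorphism of `Spin_{2n}(R)` onto `SG_{n-1}(R)`,
with inverse `g ↦ (g, (g*)⁻¹)`. -/
theorem spin_iso_SG (R : Type) [CommRing R] (m : ℕ) (hm : 2 ≤ m) (hodd : Odd (m + 1)) :
    Set.BijOn Prod.fst (SpinPair R m) (SGSet R m) ∧
    (∀ p ∈ SpinPair R m, ∀ q ∈ SpinPair R m, (p.1 * q.1, p.2 * q.2) ∈ SpinPair R m) ∧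
    (∀ g ∈ SGSet R m, (g, (invol R m g)⁻¹) ∈ SpinPair R m) := by
  refine ⟨⟨fun p hp => spin_to_SG R m hm hodd p hp, ?_, ?_⟩, spin_mul R m,
    SG_to_spin R m hm hodd⟩
  · intro p hp q hq h
    refine Prod.ext h ?_
    have h1 := (spin_star R m hodd p hp).2
    have h2 := (spin_star R m hodd q hq).2
    rw [← Matrix.inv_eq_left_inv h1, ← Matrix.inv_eq_left_inv h2, h]
  · intro g hg
    exact ⟨_, SG_to_spin R m hm hodd g hg, rfl⟩
end
end
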